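/- arXiv:1610.04409 — 2 statements merged into one kernel-verified Lean document; each statement's English description precedes it below -/
import Mathlib

section
/- The operator O = O_{(γ₁,γ₂)} and its adjoint O* (with respect to the inner product making the basis vectors h_m ⊗ h_{m'} orthonormal) satisfy the commutation relation O*∘O − O∘O* = [γ₁+γ₂]_q · id on H^{(γ₁,c₁)} ⊗ H^{(γ₂,c₂)}. -/
/-!
The operators `a⁻ ⊗ 1`, `a⁺ ⊗ 1` commute with `1 ⊗ a⁻`, `1 ⊗ a⁺`, so in `O*∘O − O∘O*` the mixed
terms cancel, and the oscillator relation `a⁻a⁺ − a⁺a⁻ = [γ]_q` on each factor leaves the scalar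
`q^{−γ₁}[γ₂]_q + q^{γ₂}[γ₁]_q`. This equals `[γ₁+γ₂]_q`, the addition formula for `q`-numbers.
-/

noncomputable section
noncomputable section

/-- The `q`-number `[γ]_q = (q^γ - q^(-γ))/(q - q⁻¹)`. -/
def qnum (q γ : ℝ) : ℝ := (q ^ γ - q ^ (-γ)) / (q - q⁻¹)

/-- The representation space `H^{(γ,c)}`: finitely supported functions `ℕ → ℂ`. -/
abbrev HO : Type := ℕ →₀ ℂ

/-- The basis vector `h_m`. -/
def hv (m : ℕ) : HO := Finsupp.single m 1

/-- The lowering operator `a⁻ h_m = [γ]_q^{1/2} m^{1/2} h_{m-1}` (so `a⁻ h_0 = 0`). -/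
def aMinus (q γ : ℝ) : HO →ₗ[ℂ] HO :=
  Finsupp.lift HO ℂ ℕ fun m => ((Real.sqrt (qnum q γ) * Real.sqrt m : ℝ) : ℂ) • hv (m - 1)

/-- The raising operator `a⁺ h_m = [γ]_q^{1/2} (m+1)^{1/2} h_{m+1}`. -/
def aPlus (q γ : ℝ) : HO →ₗ[ℂ] HO :=
  Finsupp.lift HO ℂ ℕ fun m => ((Real.sqrt (qnum q γ) * Real.sqrt (m + 1) : ℝ) : ℂ) • hv (m + 1)

/-- The operator `ε h_m = (m + c) h_m`. -/
def epsOp (c : ℝ) : HO →ₗ[ℂ] HO :=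
  Finsupp.lift HO ℂ ℕ fun m => (((m : ℝ) + c : ℝ) : ℂ) • hv m

open scoped TensorProduct

/-- The coproduct action of `a⁺` on `H^{(γ₁,c₁)} ⊗ H^{(γ₂,c₂)}`:
`Δa⁺ = q^{γ₂/2}(a⁺ ⊗ 1) + q^{−γ₁/2}(1 ⊗ a⁺)`. -/
def ΔaPlus (q γ₁ γ₂ : ℝ) : HO ⊗[ℂ] HO →ₗ[ℂ] HO ⊗[ℂ] HO :=
  ((q ^ (γ₂ / 2) : ℝ) : ℂ) • (aPlus q γ₁).rTensor HO +
    ((q ^ (-(γ₁ / 2)) : ℝ) : ℂ) • (aPlus q γ₂).lTensor HO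

/-- The coproduct action of `a⁻` on `H^{(γ₁,c₁)} ⊗ H^{(γ₂,c₂)}`:
`Δa⁻ = q^{γ₂/2}(a⁻ ⊗ 1) + q^{−γ₁/2}(1 ⊗ a⁻)`. -/
def ΔaMinus (q γ₁ γ₂ : ℝ) : HO ⊗[ℂ] HO →ₗ[ℂ] HO ⊗[ℂ] HO :=
  ((q ^ (γ₂ / 2) : ℝ) : ℂ) • (aMinus q γ₁).rTensor HO +
    ((q ^ (-(γ₁ / 2)) : ℝ) : ℂ) • (aMinus q γ₂).lTensor HO

/-- The coproduct action of `ε` on `H^{(γ₁,c₁)} ⊗ H^{(γ₂,c₂)}`: `Δε = ε ⊗ 1 + 1 ⊗ ε`. -/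
def Δeps (c₁ c₂ : ℝ) : HO ⊗[ℂ] HO →ₗ[ℂ] HO ⊗[ℂ] HO :=
  (epsOp c₁).rTensor HO + (epsOp c₂).lTensor HO

/-- The matrix coefficient of the braid operator `B_{(γ₁,c₁),(γ₂,c₂)}`. -/
def bcoef (q γ₁ γ₂ c₁ c₂ : ℝ) (m m' k : ℕ) : ℝ :=
  q ^ (-(((m : ℝ) + c₁) * γ₂ + ((m' : ℝ) + c₂) * γ₁)) *
    Real.sqrt (Nat.choose (m + k - 1) (m - 1)) * Real.sqrt (Nat.choose (m' + k) m') *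
    Real.sqrt ((q ^ (-(2 * γ₁)) - 1) * (1 - q ^ (2 * γ₂))) ^ k

/-- The braid operator `B_{(γ₁,c₁),(γ₂,c₂)} : H^{(γ₁,c₁)} ⊗ H^{(γ₂,c₂)} → H^{(γ₂,c₂)} ⊗ H^{(γ₁,c₁)}`
(the flip composed with the `R`-matrix of `ho_q`), defined on basis vectors by
`B(h_m ⊗ h_{m'}) = q^{−((m+c₁)γ₂+(m'+c₂)γ₁)} Σ_{k=0}^m binom(m+k−1,m−1)^{1/2} binom(m'+k,m')^{1/2}
((q^{−2γ₁}−1)(1−q^{2γ₂}))^{k/2} h_{m'+k} ⊗ h_{m−k}`. -/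
def braidOp (q γ₁ γ₂ c₁ c₂ : ℝ) : HO ⊗[ℂ] HO →ₗ[ℂ] HO ⊗[ℂ] HO :=
  TensorProduct.lift <|
    Finsupp.lift (HO →ₗ[ℂ] HO ⊗[ℂ] HO) ℂ ℕ fun m =>
      Finsupp.lift (HO ⊗[ℂ] HO) ℂ ℕ fun m' =>
        ∑ k ∈ Finset.range (m + 1),
          ((bcoef q γ₁ γ₂ c₁ c₂ m m' k : ℝ) : ℂ) • (hv (m' + k) ⊗ₜ[ℂ] hv (m - k))

/-- The ladder operator
`O_{(γ₁,γ₂)} = q^{−γ₁/2}[γ₁]_q^{−1/2}[γ₂]_q^{1/2}(a⁺ ⊗ 1) − q^{γ₂/2}[γ₁]_q^{1/2}[γ₂]_q^{−1/2}(1 ⊗ a⁺)`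
on `H^{(γ₁,c₁)} ⊗ H^{(γ₂,c₂)}` (the subtraction is written as adding the negated scalar multiple,
since `Sub` is not directly available on this hom type). -/
def Oop (q γ₁ γ₂ : ℝ) : HO ⊗[ℂ] HO →ₗ[ℂ] HO ⊗[ℂ] HO :=
  ((q ^ (-(γ₁ / 2)) * (Real.sqrt (qnum q γ₁))⁻¹ * Real.sqrt (qnum q γ₂) : ℝ) : ℂ) •
      (aPlus q γ₁).rTensor HO +
    (-((q ^ (γ₂ / 2) * Real.sqrt (qnum q γ₁) * (Real.sqrt (qnum q γ₂))⁻¹ : ℝ) : ℂ)) •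
      (aPlus q γ₂).lTensor HO

/-- The adjoint ladder operator (with respect to the inner product making the basis
vectors `h_m ⊗ h_{m'}` orthonormal):
`O* = q^{−γ₁/2}[γ₁]_q^{−1/2}[γ₂]_q^{1/2}(a⁻ ⊗ 1) − q^{γ₂/2}[γ₁]_q^{1/2}[γ₂]_q^{−1/2}(1 ⊗ a⁻)`. -/
def OopAdj (q γ₁ γ₂ : ℝ) : HO ⊗[ℂ] HO →ₗ[ℂ] HO ⊗[ℂ] HO :=
  ((q ^ (-(γ₁ / 2)) * (Real.sqrt (qnum q γ₁))⁻¹ * Real.sqrt (qnum q γ₂) : ℝ) : ℂ) •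
      (aMinus q γ₁).rTensor HO +
    (-((q ^ (γ₂ / 2) * Real.sqrt (qnum q γ₁) * (Real.sqrt (qnum q γ₂))⁻¹ : ℝ) : ℂ)) •
      (aMinus q γ₂).lTensor HO

theorem qnum_pos {q γ : ℝ} (hq0 : 0 < q) (hq1 : q < 1) (hγ : 0 < γ) : 0 < qnum q γ := by
  have h1 : q ^ γ < q ^ (-γ) := Real.rpow_lt_rpow_of_exponent_gt hq0 hq1 (by linarith)
  have h2 : 1 < q⁻¹ := (one_lt_inv₀ hq0).2 hq1
  exact div_pos_of_neg_of_neg (by linarith) (by linarith)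

theorem qnum_add {q : ℝ} (hq0 : 0 < q) (γ₁ γ₂ : ℝ) :
    qnum q (γ₁ + γ₂) = q ^ (-γ₁) * qnum q γ₂ + q ^ γ₂ * qnum q γ₁ := by
  unfold qnum
  rw [neg_add, Real.rpow_add hq0, Real.rpow_add hq0]
  ring

/-- The canonical commutation relation `a⁻a⁺ = a⁺a⁻ + [γ]_q` on one tensor factor. -/
theorem aMinus_aPlus {q γ : ℝ} (hg : 0 ≤ qnum q γ) (x : HO) :
    aMinus q γ (aPlus q γ x) = aPlus q γ (aMinus q γ x) + ((qnum q γ : ℝ) : ℂ) • x := by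
  have hM (m : ℕ) : aMinus q γ (hv m) =
      ((Real.sqrt (qnum q γ) * Real.sqrt m : ℝ) : ℂ) • hv (m - 1) := by
    simp [aMinus, hv]
  have hP (m : ℕ) : aPlus q γ (hv m) =
      ((Real.sqrt (qnum q γ) * Real.sqrt (m + 1) : ℝ) : ℂ) • hv (m + 1) := by
    simp [aPlus, hv]
  suffices h : aMinus q γ ∘ₗ aPlus q γ =
      aPlus q γ ∘ₗ aMinus q γ + ((qnum q γ : ℝ) : ℂ) • LinearMap.id from
    LinearMap.congr_fun h x
  refine Finsupp.lhom_ext' fun m => LinearMap.ext_ring ?_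
  change aMinus q γ (aPlus q γ (hv m)) =
    aPlus q γ (aMinus q γ (hv m)) + ((qnum q γ : ℝ) : ℂ) • hv m
  have hs := Real.mul_self_sqrt hg
  have key (t : ℝ) (ht : 0 ≤ t) : (Real.sqrt (qnum q γ) * Real.sqrt t) *
      (Real.sqrt (qnum q γ) * Real.sqrt t) = qnum q γ * t := by
    rw [mul_mul_mul_comm, hs, Real.mul_self_sqrt ht]
  -- `m - 1` is truncated subtraction, so the vacuum `h_0` is treated separately.
  rcases m with _ | m
  · rw [hP, hM, map_smul, map_smul, hM, smul_smul, ← Complex.ofReal_mul]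
    simp [hs]
  · rw [hP, hM, map_smul, map_smul, hM, hP, smul_smul, smul_smul, ← Complex.ofReal_mul,
      ← Complex.ofReal_mul]
    simp only [Nat.add_sub_cancel, Nat.cast_add, Nat.cast_one]
    rw [key _ (by positivity), key _ (by positivity), ← add_smul, ← Complex.ofReal_add]
    congr 2
    ring

/-- the commutation relation `O*∘O − O∘O* = [γ₁+γ₂]_q · id` on
`H^{(γ₁,c₁)} ⊗ H^{(γ₂,c₂)}` (written with the subtraction moved to the right-hand side). -/
theorem stmt6 (q γ₁ γ₂ c₁ c₂ : ℝ) (hq0 : 0 < q) (hq1 : q < 1)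
    (hγ₁ : 0 < γ₁) (hγ₂ : 0 < γ₂) :
    OopAdj q γ₁ γ₂ ∘ₗ Oop q γ₁ γ₂ =
      Oop q γ₁ γ₂ ∘ₗ OopAdj q γ₁ γ₂ + ((qnum q (γ₁ + γ₂) : ℝ) : ℂ) • LinearMap.id := by
  have h₁ := qnum_pos hq0 hq1 hγ₁
  have h₂ := qnum_pos hq0 hq1 hγ₂
  have hc : qnum q (γ₁ + γ₂) =
      (q ^ (-(γ₁ / 2)) * (Real.sqrt (qnum q γ₁))⁻¹ * Real.sqrt (qnum q γ₂)) ^ 2 * qnum q γ₁ +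
      (q ^ (γ₂ / 2) * Real.sqrt (qnum q γ₁) * (Real.sqrt (qnum q γ₂))⁻¹) ^ 2 * qnum q γ₂ := by
    have e₁ : (q ^ (-(γ₁ / 2))) ^ 2 = q ^ (-γ₁) := by
      rw [← Real.rpow_mul_natCast hq0.le]; congr 1; push_cast; ring
    have e₂ : (q ^ (γ₂ / 2)) ^ 2 = q ^ γ₂ := by
      rw [← Real.rpow_mul_natCast hq0.le]; congr 1; push_cast; ring
    rw [qnum_add hq0]
    simp only [mul_pow, inv_pow, Real.sq_sqrt h₁.le, Real.sq_sqrt h₂.le, e₁, e₂]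
    field_simp
  unfold Oop OopAdj
  rw [hc]
  generalize q ^ (-(γ₁ / 2)) * (Real.sqrt (qnum q γ₁))⁻¹ * Real.sqrt (qnum q γ₂) = a
  generalize q ^ (γ₂ / 2) * Real.sqrt (qnum q γ₁) * (Real.sqrt (qnum q γ₂))⁻¹ = b
  refine TensorProduct.ext' fun x y => ?_
  simp only [LinearMap.comp_apply, LinearMap.add_apply, LinearMap.smul_apply, map_add, map_smul,
    LinearMap.rTensor_tmul, LinearMap.lTensor_tmul, LinearMap.id_apply,
    aMinus_aPlus h₁.le, aMinus_aPlus h₂.le, TensorProduct.add_tmul, TensorProduct.tmul_add,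
    ← TensorProduct.smul_tmul', TensorProduct.tmul_smul]
  push_cast
  module
end
end
end

section
/- For every N ∈ ℕ, the N+1 vectors u_j = (Δa⁺)^{N−j} O^j (h₀ ⊗ h₀), j = 0, 1, …, N, form a basis of the weight space W^{(N)} = span{h_m ⊗ h_{m'} : m + m' = N} ⊂ H^{(γ₁,c₁)} ⊗ H^{(γ₂,c₂)}; that is, W^{(N)} is the internal direct sum of the one-dimensional subspaces spanned by the u_j. -/
/-!
Write `A = a⁺ ⊗ 1` and `B = 1 ⊗ a⁺`. These operators commute, and `A ^ m B ^ m' (h₀ ⊗ h₀)` is a nonzero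
multiple of `h_m ⊗ h_{m'}`, so `W^{(N)}` is the space of degree-`N` forms in `A, B` applied to the
vacuum (`weight_eq_formSpan`). The operators `Δa⁺` and `O` arise from `A, B` by the linear change of
variables with matrix entries `α, β, δ, -ε`, where `α, β, δ, ε > 0`; its determinant `-(αε + βδ)` is
nonzero, so it is invertible. An invertible linear change of variables does not change the
space of degree-`N` forms (`formSpan_le`, applied in both directions), hence the `u_j` span `W^{(N)}`.
As `W^{(N)}` has dimension `N + 1` (`finrank_weight`), these `N + 1` spanning vectors are linearly
independent.
-/


noncomputable section
noncomputable section

open scoped TensorProduct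

/-- The space of degree-`N` forms in the operators `X, Y` applied to the vector `v`: the span of the
vectors `X ^ m (Y ^ m' v)` with `m + m' = N`. -/
def formSpan {V : Type*} [AddCommMonoid V] [Module ℂ V] (X Y : V →ₗ[ℂ] V) (v : V) (N : ℕ) :
    Submodule ℂ V :=
  Submodule.span ℂ {x | ∃ m m' : ℕ, m + m' = N ∧ x = (X ^ m) ((Y ^ m') v)}

section FormSpan

variable {V : Type*} [AddCommMonoid V] [Module ℂ V]

theorem formSpan_left {X Y : V →ₗ[ℂ] V} {v : V} {N : ℕ} {x : V}
    (hx : x ∈ formSpan X Y v N) : X x ∈ formSpan X Y v (N + 1) := by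
  have h : formSpan X Y v N ≤ (formSpan X Y v (N + 1)).comap X := by
    refine Submodule.span_le.2 ?_
    rintro _ ⟨m, m', h, rfl⟩
    exact Submodule.subset_span ⟨m + 1, m', by omega, by rw [pow_succ', Module.End.mul_apply]⟩
  exact h hx

theorem formSpan_right {X Y : V →ₗ[ℂ] V} (hXY : Commute X Y) {v : V} {N : ℕ} {x : V}
    (hx : x ∈ formSpan X Y v N) : Y x ∈ formSpan X Y v (N + 1) := by
  have h : formSpan X Y v N ≤ (formSpan X Y v (N + 1)).comap Y := by
    refine Submodule.span_le.2 ?_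
    rintro _ ⟨m, m', h, rfl⟩
    refine Submodule.subset_span ⟨m, m' + 1, by omega, ?_⟩
    rw [pow_succ', Module.End.mul_apply, ← Module.End.mul_apply Y, ← Module.End.mul_apply _ Y,
      (hXY.pow_left m).eq]
  exact h hx

/-- Forms in linear combinations of `X` and `Y` are forms of the same degree in `X` and `Y`. -/
theorem formSpan_le {X Y A B : V →ₗ[ℂ] V} (hXY : Commute X Y) {a b c d : ℂ}
    (hA : A = a • X + b • Y) (hB : B = c • X + d • Y) (v : V) (N : ℕ) :
    formSpan A B v N ≤ formSpan X Y v N := by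
  have step : ∀ (a b : ℂ) (n : ℕ) (x : V), x ∈ formSpan X Y v n →
      (a • X + b • Y) x ∈ formSpan X Y v (n + 1) := by
    intro a b n x hx
    simp only [LinearMap.add_apply, LinearMap.smul_apply]
    exact add_mem (Submodule.smul_mem _ _ (formSpan_left hx))
      (Submodule.smul_mem _ _ (formSpan_right hXY hx))
  have hBn : ∀ n : ℕ, (B ^ n) v ∈ formSpan X Y v n := by
    intro n
    induction n with
    | zero => exact Submodule.subset_span ⟨0, 0, rfl, by simp⟩
    | succ n ih =>
      rw [pow_succ', Module.End.mul_apply]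
      have := step c d n _ ih
      rwa [← hB] at this
  have hAn : ∀ m n : ℕ, (A ^ m) ((B ^ n) v) ∈ formSpan X Y v (m + n) := by
    intro m n
    induction m with
    | zero => simpa using hBn n
    | succ m ih =>
      rw [pow_succ', Module.End.mul_apply]
      have := step a b _ _ ih
      rwa [← hA, add_right_comm] at this
  refine Submodule.span_le.2 ?_
  rintro _ ⟨m, m', rfl, rfl⟩
  exact hAn m m'

/-- An invertible linear change of variables preserves the space of forms of degree `N`. -/
theorem formSpan_eq {X Y A B : V →ₗ[ℂ] V} (hAB : Commute A B) {a b c d : ℂ}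
    (hX : X = a • A + b • B) (hY : Y = c • A + d • B) (hdet : a * d - b * c ≠ 0) (v : V) (N : ℕ) :
    formSpan X Y v N = formSpan A B v N := by
  have hXY : Commute X Y := by
    rw [hX, hY]
    refine Commute.add_left (Commute.add_right ?_ ?_) (Commute.add_right ?_ ?_)
    · exact ((Commute.refl A).smul_left a).smul_right c
    · exact (hAB.smul_left a).smul_right d
    · exact (hAB.symm.smul_left b).smul_right c
    · exact ((Commute.refl B).smul_left b).smul_right d
  -- The inverse change of variables is given by Cramer's rule.
  refine le_antisymm (formSpan_le hAB hX hY v N)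
    (formSpan_le hXY (a := d / (a * d - b * c)) (b := -b / (a * d - b * c))
      (c := -c / (a * d - b * c)) (d := a / (a * d - b * c)) ?_ ?_ v N)
  · have h1 : d / (a * d - b * c) * a + -b / (a * d - b * c) * c = 1 := by
      rw [div_mul_eq_mul_div, div_mul_eq_mul_div, ← add_div, div_eq_one_iff_eq hdet]; ring
    have h2 : d / (a * d - b * c) * b + -b / (a * d - b * c) * d = 0 := by field_simp; ring
    calc A = (1 : ℂ) • A + (0 : ℂ) • B := by simp
      _ = _ := by rw [← h1, ← h2, hX, hY]; module
  · have h1 : -c / (a * d - b * c) * a + a / (a * d - b * c) * c = 0 := by field_simp; ring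
    have h2 : -c / (a * d - b * c) * b + a / (a * d - b * c) * d = 1 := by
      rw [div_mul_eq_mul_div, div_mul_eq_mul_div, ← add_div, div_eq_one_iff_eq hdet]; ring
    calc B = (0 : ℂ) • A + (1 : ℂ) • B := by simp
      _ = _ := by rw [← h1, ← h2, hX, hY]; module

end FormSpan

theorem aPlus_pow {q γ : ℝ} (h : 0 < qnum q γ) (m : ℕ) :
    ∃ c : ℂ, c ≠ 0 ∧ (aPlus q γ ^ m) (hv 0) = c • hv m := by
  induction m with
  | zero => exact ⟨1, one_ne_zero, by simp⟩
  | succ m ih =>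
    obtain ⟨c, hc, e⟩ := ih
    refine ⟨c * ((Real.sqrt (qnum q γ) * Real.sqrt (m + 1) : ℝ) : ℂ), mul_ne_zero hc ?_, ?_⟩
    · have : 0 < Real.sqrt (qnum q γ) * Real.sqrt (m + 1) := by positivity
      exact_mod_cast this.ne'
    · have : aPlus q γ (hv m) =
          ((Real.sqrt (qnum q γ) * Real.sqrt (m + 1) : ℝ) : ℂ) • hv (m + 1) := by
        simp [aPlus, hv]
      rw [pow_succ', Module.End.mul_apply, e, map_smul, this, smul_smul]

theorem weight_eq_formSpan {q γ₁ γ₂ : ℝ} (h₁ : 0 < qnum q γ₁) (h₂ : 0 < qnum q γ₂) (N : ℕ) :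
    Submodule.span ℂ {x : HO ⊗[ℂ] HO | ∃ m m' : ℕ, m + m' = N ∧ x = hv m ⊗ₜ[ℂ] hv m'} =
      formSpan ((aPlus q γ₁).rTensor HO) ((aPlus q γ₂).lTensor HO) (hv 0 ⊗ₜ[ℂ] hv 0) N := by
  have key : ∀ m m' : ℕ, ∃ c : ℂ, c ≠ 0 ∧
      (((aPlus q γ₁).rTensor HO) ^ m) ((((aPlus q γ₂).lTensor HO) ^ m') (hv 0 ⊗ₜ[ℂ] hv 0)) =
        c • (hv m ⊗ₜ[ℂ] hv m') := by
    intro m m'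
    obtain ⟨c, hc, e⟩ := aPlus_pow h₁ m
    obtain ⟨c', hc', e'⟩ := aPlus_pow h₂ m'
    refine ⟨c * c', mul_ne_zero hc hc', ?_⟩
    rw [LinearMap.rTensor_pow, LinearMap.lTensor_pow, LinearMap.lTensor_tmul,
      LinearMap.rTensor_tmul, e, e', TensorProduct.smul_tmul_smul]
  apply le_antisymm
  · refine Submodule.span_le.2 ?_
    rintro _ ⟨m, m', h, rfl⟩
    obtain ⟨c, hc, e⟩ := key m m'
    rw [SetLike.mem_coe, ← Submodule.smul_mem_iff _ hc, ← e]
    exact Submodule.subset_span ⟨m, m', h, rfl⟩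
  · refine Submodule.span_le.2 ?_
    rintro _ ⟨m, m', h, rfl⟩
    obtain ⟨c, hc, e⟩ := key m m'
    rw [SetLike.mem_coe, e]
    exact Submodule.smul_mem _ _ (Submodule.subset_span ⟨m, m', h, rfl⟩)

theorem finrank_weight (N : ℕ) :
    Module.finrank ℂ (Submodule.span ℂ
      {x : HO ⊗[ℂ] HO | ∃ m m' : ℕ, m + m' = N ∧ x = hv m ⊗ₜ[ℂ] hv m'}) = N + 1 := by
  let b : Module.Basis ℕ ℂ HO := Finsupp.basisSingleOne
  let f : Fin (N + 1) → ℕ × ℕ := fun j => ((j : ℕ), N - (j : ℕ))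
  have hf : Function.Injective f := fun i j hij => Fin.ext (congrArg Prod.fst hij)
  have hli : LinearIndependent ℂ ((b.tensorProduct b) ∘ f) :=
    (b.tensorProduct b).linearIndependent.comp f hf
  have hset : {x : HO ⊗[ℂ] HO | ∃ m m' : ℕ, m + m' = N ∧ x = hv m ⊗ₜ[ℂ] hv m'} =
      Set.range ((b.tensorProduct b) ∘ f) := by
    ext x
    constructor
    · rintro ⟨m, m', h, rfl⟩
      refine ⟨⟨m, by omega⟩, ?_⟩
      have : N - m = m' := by omega
      simp [b, f, hv, Module.Basis.tensorProduct_apply, this]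
    · rintro ⟨j, rfl⟩
      exact ⟨j, N - j, by omega, by simp [b, f, hv, Module.Basis.tensorProduct_apply]⟩
  rw [hset, finrank_span_eq_card hli, Fintype.card_fin]

/-- for every `N`, the `N+1` vectors `u_j = (Δa⁺)^{N−j} O^j (h₀ ⊗ h₀)`,
`j = 0, …, N`, form a basis of the weight space
`W^{(N)} = span{h_m ⊗ h_{m'} : m + m' = N}`; i.e. they are linearly independent and
`W^{(N)}` is the (internal direct) sum of the lines they span. -/
theorem stmt10 (q γ₁ γ₂ c₁ c₂ : ℝ) (hq0 : 0 < q) (hq1 : q < 1)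
    (hγ₁ : 0 < γ₁) (hγ₂ : 0 < γ₂) (N : ℕ) :
    ∀ u : Fin (N + 1) → HO ⊗[ℂ] HO,
      (∀ j : Fin (N + 1),
        u j = ((ΔaPlus q γ₁ γ₂) ^ (N - (j : ℕ))) (((Oop q γ₁ γ₂) ^ (j : ℕ)) (hv 0 ⊗ₜ[ℂ] hv 0))) →
      LinearIndependent ℂ u ∧
      Submodule.span ℂ (Set.range u) =
        Submodule.span ℂ {x : HO ⊗[ℂ] HO | ∃ m m' : ℕ, m + m' = N ∧ x = hv m ⊗ₜ[ℂ] hv m'} := by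
  intro u hu
  have h₁ := qnum_pos hq0 hq1 hγ₁
  have h₂ := qnum_pos hq0 hq1 hγ₂
  have hcomm : Commute ((aPlus q γ₁).rTensor HO) ((aPlus q γ₂).lTensor HO) := by
    change _ ∘ₗ _ = _ ∘ₗ _
    rw [LinearMap.rTensor_comp_lTensor, LinearMap.lTensor_comp_rTensor]
  have hrange : Set.range u = {x | ∃ m m' : ℕ, m + m' = N ∧
      x = (ΔaPlus q γ₁ γ₂ ^ m) ((Oop q γ₁ γ₂ ^ m') (hv 0 ⊗ₜ[ℂ] hv 0))} := by
    ext x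
    constructor
    · rintro ⟨j, rfl⟩
      exact ⟨N - j, j, by omega, hu j⟩
    · rintro ⟨m, m', h, rfl⟩
      refine ⟨⟨m', by omega⟩, ?_⟩
      have : N - m' = m := by omega
      rw [hu]
      simp only [this]
  have hspan : Submodule.span ℂ (Set.range u) =
      Submodule.span ℂ {x : HO ⊗[ℂ] HO | ∃ m m' : ℕ, m + m' = N ∧ x = hv m ⊗ₜ[ℂ] hv m'} := by
    rw [hrange, weight_eq_formSpan h₁ h₂]
    refine formSpan_eq hcomm rfl rfl ?_ _ N
    -- Up to sign, the determinant is a sum of two positive real numbers.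
    have hpos : 0 < q ^ (γ₂ / 2) * (q ^ (γ₂ / 2) * √(qnum q γ₁) * (√(qnum q γ₂))⁻¹) +
        q ^ (-(γ₁ / 2)) * (q ^ (-(γ₁ / 2)) * (√(qnum q γ₁))⁻¹ * √(qnum q γ₂)) := by
      positivity
    rw [mul_neg, ← neg_add', neg_ne_zero]
    exact_mod_cast hpos.ne'
  refine ⟨?_, hspan⟩
  rw [linearIndependent_iff_card_eq_finrank_span, Set.finrank, hspan, finrank_weight,
    Fintype.card_fin]
end
end
end
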